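/- Let $d \geq 1$ and $d_1, d_2, d_3 \geq 0$ with $d_1+d_2+d_3 \leq d-1$. Let $A_4 \in \mathbb{Z}^{d\times d}$ be the identity except one row with diagonal entry $4$ containing $d_1$ ones, $d_2$ twos, and $d_3$ threes. Then the $\delta$-polynomial of $\mathcal{P}(A_4)$ is $1 + t^{k_1} + t^{k_2} + t^{k_3}$ where $k_1 = 1 - \lfloor(1-d_1-2d_2-3d_3)/4\rfloor$, $k_2 = 1 - \lfloor(1-d_1-d_3)/2\rfloor$, and $k_3 = 1 - \lfloor(3-3d_1-2d_2-d_3)/4\rfloor$. -/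

import Mathlib

open Set Pointwise

/-- The number of lattice points in the `n`-th dilation of `P ⊆ ℝ^N`. -/
noncomputable def ehr {N : ℕ} (P : Set (Fin N → ℝ)) (n : ℕ) : ℕ :=
  Set.ncard {x : Fin N → ℤ | (fun i => (x i : ℝ)) ∈ (n : ℝ) • P}

/-- The `i`-th coefficient of `(1-λ)^(d+1) * (1 + ∑_{n ≥ 1} i(P,n) λ^n)`,
i.e. the `i`-th entry of the δ-vector of a `d`-dimensional integral polytope. -/
noncomputable def deltaVec {N : ℕ} (P : Set (Fin N → ℝ)) (d i : ℕ) : ℤ :=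
  ∑ j ∈ Finset.range (i + 1),
    (-1 : ℤ) ^ (i - j) * (Nat.choose (d + 1) (i - j) : ℤ) * (ehr P j : ℤ)

/-- `P ⊆ ℝ^N` is an integral polytope of dimension `d`. -/
def IsIntegralPolytope {N : ℕ} (P : Set (Fin N → ℝ)) (d : ℕ) : Prop :=
  ∃ V : Finset (Fin N → ℤ), V.Nonempty ∧
    P = convexHull ℝ ((fun v i => ((v i : ℝ))) '' (V : Set (Fin N → ℤ))) ∧
    Module.finrank ℝ (vectorSpan ℝ P) = d

/-!
Every lattice point of the cone over `𝒫(A)` is, uniquely, a lattice point `p` of the half-open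
parallelepiped spanned by the rows of `A` plus a nonnegative integral combination of the rows. It
enters the dilations of `𝒫(A)` at the height of `p` plus the sum of the coefficients, so the
Ehrhart series is `(∑ p, t ^ height p) / (1 - t) ^ (d + 1)` and the `δ`-polynomial is its numerator.
When `A` is the identity except for its `k`-th row `u`, and `u k > 0`, the points `p` are determined
by their `k`-th coordinate `r = 0, …, u k - 1`: the other coordinates are `⌈r * u j / u k⌉`. For
`u k = 4` the values `r = 3, 2, 1` give the exponents `k₁, k₂, k₃`.
-/

open Matrix

section BoundedSums

variable {ι : Type*} [Fintype ι]

theorem ncard_setOf_sum_le (m : ℕ) :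
    {y : ι → ℕ | ∑ i, y i ≤ m}.ncard = (Fintype.card ι + m).choose (Fintype.card ι) := by
  classical
  have hunion : {y : ι → ℕ | ∑ i, y i ≤ m} =
      ((Finset.range (m + 1)).biUnion (Finset.piAntidiag Finset.univ) : Finset (ι → ℕ)) := by
    ext y
    simp
  have hcard (s : ℕ) :
      (Finset.piAntidiag (Finset.univ : Finset ι) s).card = (Fintype.card ι).multichoose s := by
    rw [← Finset.map_sym_eq_piAntidiag, Finset.card_map]
    simp [Finset.sym_univ, Sym.card_sym_eq_multichoose]
  have hdisj : (Finset.range (m + 1) : Set ℕ).PairwiseDisjoint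
      (Finset.piAntidiag (Finset.univ : Finset ι)) := by
    refine fun m _ n _ hmn => Finset.disjoint_left.2 fun y hm hn => hmn ?_
    rw [← (Finset.mem_piAntidiag.1 hm).1, (Finset.mem_piAntidiag.1 hn).1]
  rw [hunion, ncard_coe_finset, Finset.card_biUnion hdisj, Finset.sum_congr rfl fun s _ => hcard s,
    Nat.sum_range_multichoose, add_comm]

theorem ncard_setOf_add_sum_le (h n : ℕ) :
    {y : ι → ℕ | h + ∑ i, y i ≤ n}.ncard =
      if h ≤ n then (Fintype.card ι + (n - h)).choose (Fintype.card ι) else 0 := by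
  split_ifs with hn
  · rw [← ncard_setOf_sum_le]
    congr 1
    ext y
    simp only [mem_ofPred_eq]
    omega
  · convert ncard_empty (ι → ℕ)
    ext y
    simp only [mem_ofPred_eq, mem_empty_iff_false, iff_false]
    omega

end BoundedSums

section GeneratingFunction

variable {N : ℕ} (P : Set (Fin N → ℝ)) (d : ℕ)

theorem coeff_one_sub_X_pow {R : Type*} [CommRing R] (n i : ℕ) :
    PowerSeries.coeff i ((1 - PowerSeries.X : PowerSeries R) ^ n) =
      (-1) ^ i * (n.choose i : R) := by
  have h : (1 - PowerSeries.X : PowerSeries R) =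
      PowerSeries.rescale (-1) ((1 + Polynomial.X : Polynomial R) : PowerSeries R) := by
    simp [sub_eq_add_neg]
  rw [h, ← map_pow, PowerSeries.coeff_rescale, ← Polynomial.coe_pow, Polynomial.coeff_coe,
    Polynomial.coeff_one_add_X_pow]

theorem deltaVec_eq_coeff (i : ℕ) :
    deltaVec P d i = PowerSeries.coeff i
      (PowerSeries.mk (fun n => (ehr P n : ℤ)) * (1 - PowerSeries.X) ^ (d + 1)) := by
  simp only [PowerSeries.coeff_mul, PowerSeries.coeff_mk, coeff_one_sub_X_pow,
    Finset.Nat.sum_antidiagonal_eq_sum_range_succ_mk, deltaVec]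
  exact Finset.sum_congr rfl fun j _ => mul_comm _ _

variable {P d} {α : Type*} {s : Finset α} {h : α → ℕ}

theorem deltaVec_eq_card_filter
    (hP : ∀ n, ehr P n = ∑ p ∈ s, if h p ≤ n then (d + (n - h p)).choose d else 0) (i : ℕ) :
    deltaVec P d i = (s.filter fun p => i = h p).card := by
  have hmk : PowerSeries.mk (fun n => (ehr P n : ℤ)) =
      ∑ p ∈ s, PowerSeries.X ^ h p * PowerSeries.mk fun n => ((d + n).choose d : ℤ) := by
    ext n
    simp [hP, PowerSeries.coeff_X_pow_mul']
  rw [deltaVec_eq_coeff, hmk, Finset.sum_mul, map_sum, Finset.card_filter, Nat.cast_sum]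
  refine Finset.sum_congr rfl fun p _ => ?_
  rw [mul_assoc, PowerSeries.mk_add_choose_mul_one_sub_pow_eq_one, mul_one, PowerSeries.coeff_X_pow,
    Nat.cast_ite, Nat.cast_one, Nat.cast_zero]

theorem sum_deltaVec_eq_sum_X_pow (hd : ∀ p ∈ s, h p ≤ d)
    (hP : ∀ n, ehr P n = ∑ p ∈ s, if h p ≤ n then (d + (n - h p)).choose d else 0) :
    ∑ i ∈ Finset.range (d + 1), Polynomial.C (deltaVec P d i) * Polynomial.X ^ i =
      ∑ p ∈ s, (Polynomial.X : Polynomial ℤ) ^ h p := by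
  rw [← Finset.sum_fiberwise_of_maps_to
    (fun p hp => Finset.mem_range.2 (Nat.lt_succ_of_le (hd p hp)))]
  refine Finset.sum_congr rfl fun i _ => ?_
  have hfiber : ∑ p ∈ s.filter (h · = i), (Polynomial.X : Polynomial ℤ) ^ h p =
      ∑ _p ∈ s.filter (h · = i), Polynomial.X ^ i :=
    Finset.sum_congr rfl fun p hp => by rw [(Finset.mem_filter.1 hp).2]
  rw [hfiber, deltaVec_eq_card_filter hP]
  simp [eq_comm]

end GeneratingFunction

section ConvexHull

variable {ι E : Type*} [Fintype ι] [AddCommGroup E] [Module ℝ E]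

theorem convexHull_range_eq_image_stdSimplex (v : ι → E) :
    convexHull ℝ (range v) = Fintype.linearCombination ℝ v '' stdSimplex ℝ ι := by
  classical
  rw [← convexHull_rangle_single_eq_stdSimplex, LinearMap.image_convexHull, ← range_comp]
  congr 2
  ext i
  simp [Fintype.linearCombination_apply_single]

theorem mem_convexHull_insert_zero_range_iff (v : ι → E) (x : E) :
    x ∈ convexHull ℝ (insert 0 (range v)) ↔
      ∃ c : ι → ℝ, (∀ i, 0 ≤ c i) ∧ ∑ i, c i ≤ 1 ∧ ∑ i, c i • v i = x := by
  have hrange : insert 0 (range v) = range fun o : Option ι => o.elim 0 v := by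
    ext x
    simp [Option.exists, eq_comm]
  rw [hrange, convexHull_range_eq_image_stdSimplex]
  constructor
  · rintro ⟨c, ⟨hc, hsum⟩, rfl⟩
    rw [Fintype.sum_option] at hsum
    refine ⟨fun i => c (some i), fun i => hc _, by linarith [hc none], ?_⟩
    simp [Fintype.linearCombination_apply, Fintype.sum_option]
  · rintro ⟨c, hc, hsum, rfl⟩
    refine ⟨fun o => o.elim (1 - ∑ i, c i) c, ⟨?_, ?_⟩, ?_⟩
    · rintro (_ | i)
      · exact sub_nonneg.2 hsum
      · exact hc i
    · simp [Fintype.sum_option]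
    · simp [Fintype.linearCombination_apply, Fintype.sum_option]

theorem mem_smul_convexHull_rows_iff [DecidableEq ι] {M : Matrix ι ι ℝ} (hM : IsUnit M.det) {t : ℝ}
    (ht : 0 ≤ t) (x : ι → ℝ) :
    x ∈ t • convexHull ℝ (insert 0 (range M.row)) ↔
      (∀ i, 0 ≤ (x ᵥ* M⁻¹) i) ∧ ∑ i, (x ᵥ* M⁻¹) i ≤ t := by
  have hinv (y : ι → ℝ) : y ᵥ* M⁻¹ ᵥ* M = y := by
    rw [vecMul_vecMul, nonsing_inv_mul M hM, vecMul_one]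
  have hone (y : ι → ℝ) : y ∈ convexHull ℝ (insert 0 (range M.row)) ↔
      (∀ i, 0 ≤ (y ᵥ* M⁻¹) i) ∧ ∑ i, (y ᵥ* M⁻¹) i ≤ 1 := by
    rw [mem_convexHull_insert_zero_range_iff]
    constructor
    · rintro ⟨c, hc, hsum, rfl⟩
      have hcoords : (∑ i, c i • M.row i) ᵥ* M⁻¹ = c := by
        simp only [row, ← vecMul_eq_sum, vecMul_vecMul, mul_nonsing_inv M hM, vecMul_one]
      rw [hcoords]
      exact ⟨hc, hsum⟩
    · rintro ⟨hc, hsum⟩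
      exact ⟨_, hc, hsum, by simpa only [row, ← vecMul_eq_sum] using hinv y⟩
  rcases ht.eq_or_lt with rfl | ht
  · rw [zero_smul_set ⟨0, subset_convexHull ℝ _ (mem_insert _ _)⟩, mem_zero]
    constructor
    · rintro rfl
      simp
    · rintro ⟨hc, hsum⟩
      have hzero : x ᵥ* M⁻¹ = 0 := (Fintype.sum_eq_zero_iff_of_nonneg hc).1
        (hsum.antisymm (Finset.sum_nonneg fun i _ => hc i))
      rw [← hinv x, hzero, zero_vecMul]
  · rw [mem_smul_set_iff_inv_smul_mem₀ ht.ne', hone]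
    simp only [smul_vecMul, Pi.smul_apply, smul_eq_mul, ← Finset.mul_sum, inv_mul_le_one₀ ht,
      mul_nonneg_iff_of_pos_left (inv_pos.2 ht)]

end ConvexHull

section LatticeSimplex

variable {d : ℕ}

/-- The simplex `𝒫(A)` with vertices the rows of `A` together with the origin. -/
def rowSimplex (A : Matrix (Fin d) (Fin d) ℤ) : Set (Fin d → ℝ) :=
  convexHull ℝ (insert 0 (range fun i j => (A i j : ℝ)))

/-- The coordinates of the lattice point `x` with respect to the rows of `A`; they are meaningful
only for `A.det ≠ 0`, since otherwise the inverse matrix is `0` by convention. -/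
noncomputable def rowCoords (A : Matrix (Fin d) (Fin d) ℤ) (x : Fin d → ℤ) : Fin d → ℝ :=
  (fun j => (x j : ℝ)) ᵥ* (A.map fun a => (a : ℝ))⁻¹

/-- The lattice points of the half-open parallelepiped spanned by the rows of `A`. -/
def boxPoints (A : Matrix (Fin d) (Fin d) ℤ) : Set (Fin d → ℤ) :=
  {x | ∀ i, rowCoords A x i ∈ Ico 0 1}

/-- The least dilation factor `n` for which `n • rowSimplex A` contains `x`, for `x` in the cone
spanned by the rows of `A`. -/
noncomputable def rowHeight (A : Matrix (Fin d) (Fin d) ℤ) (x : Fin d → ℤ) : ℕ :=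
  ⌈∑ i, rowCoords A x i⌉₊

variable {A : Matrix (Fin d) (Fin d) ℤ}

theorem isUnit_det_map_intCast (hA : A.det ≠ 0) : IsUnit (A.map fun a => (a : ℝ)).det := by
  rw [← Int.cast_det]
  exact (Int.cast_ne_zero.2 hA).isUnit

theorem rowCoords_eq_iff (hA : A.det ≠ 0) {x : Fin d → ℤ} {c : Fin d → ℝ} :
    rowCoords A x = c ↔ (c ᵥ* A.map fun a => (a : ℝ)) = fun j => (x j : ℝ) := by
  have hM := isUnit_det_map_intCast hA
  constructor
  · rintro rfl
    rw [rowCoords, vecMul_vecMul, nonsing_inv_mul _ hM, vecMul_one]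
  · intro h
    rw [rowCoords, ← h, vecMul_vecMul, mul_nonsing_inv _ hM, vecMul_one]

theorem rowCoords_add_vecMul (hA : A.det ≠ 0) (x y : Fin d → ℤ) :
    rowCoords A (x + y ᵥ* A) = rowCoords A x + fun i => (y i : ℝ) := by
  rw [rowCoords_eq_iff hA, add_vecMul, (rowCoords_eq_iff hA).1 rfl]
  ext j
  simp [vecMul_apply_eq_sum]

theorem intCast_mem_smul_rowSimplex_iff (hA : A.det ≠ 0) (n : ℕ) (x : Fin d → ℤ) :
    (fun j => (x j : ℝ)) ∈ (n : ℝ) • rowSimplex A ↔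
      (∀ i, 0 ≤ rowCoords A x i) ∧ rowHeight A x ≤ n := by
  rw [rowHeight, Nat.ceil_le]
  exact mem_smul_convexHull_rows_iff (isUnit_det_map_intCast hA) n.cast_nonneg _

theorem rowHeight_add_vecMul (hA : A.det ≠ 0) {x : Fin d → ℤ} (hx : ∀ i, 0 ≤ rowCoords A x i)
    (y : Fin d → ℕ) :
    rowHeight A (x + (fun i => (y i : ℤ)) ᵥ* A) = rowHeight A x + ∑ i, y i := by
  rw [rowHeight, rowHeight, rowCoords_add_vecMul hA,
    ← Nat.ceil_add_natCast (Finset.sum_nonneg fun i _ => hx i)]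
  simp [Finset.sum_add_distrib]

theorem boxPoints_finite (hA : A.det ≠ 0) : (boxPoints A).Finite := by
  refine (finite_Icc (fun j => -∑ i, |A i j|) fun j => ∑ i, |A i j|).subset fun x hx => ?_
  have hbound (j : Fin d) : |x j| ≤ ∑ i, |A i j| := by
    have hxj : (x j : ℝ) = ∑ i, rowCoords A x i * A i j :=
      (congrFun ((rowCoords_eq_iff hA).1 rfl) j).symm
    have hreal : |(x j : ℝ)| ≤ ∑ i, |(A i j : ℝ)| := by
      rw [hxj]
      refine (Finset.abs_sum_le_sum_abs _ _).trans (Finset.sum_le_sum fun i _ => ?_)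
      rw [abs_mul, abs_of_nonneg (hx i).1]
      exact mul_le_of_le_one_left (abs_nonneg _) (hx i).2.le
    exact_mod_cast hreal
  exact ⟨fun j => (abs_le.1 (hbound j)).1, fun j => (abs_le.1 (hbound j)).2⟩

theorem rowHeight_le_of_mem_boxPoints {x : Fin d → ℤ} (hx : x ∈ boxPoints A) :
    rowHeight A x ≤ d := by
  refine Nat.ceil_le.2 ((Finset.sum_le_sum fun i _ => (hx i).2.le).trans_eq ?_)
  simp

theorem exists_boxPoint_add_vecMul (hA : A.det ≠ 0) {x : Fin d → ℤ}
    (hx : ∀ i, 0 ≤ rowCoords A x i) :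
    ∃ p ∈ boxPoints A, ∃ y : Fin d → ℕ, p + (fun i => (y i : ℤ)) ᵥ* A = x := by
  set y : Fin d → ℕ := fun i => ⌊rowCoords A x i⌋₊
  refine ⟨x - (fun i => (y i : ℤ)) ᵥ* A, fun i => ?_, y, sub_add_cancel _ _⟩
  have hcoords : rowCoords A (x - (fun i => (y i : ℤ)) ᵥ* A) i = rowCoords A x i - y i := by
    rw [sub_eq_add_neg, ← neg_vecMul, rowCoords_add_vecMul hA]
    simp [sub_eq_add_neg]
  rw [hcoords]
  exact ⟨sub_nonneg.2 (Nat.floor_le (hx i)), by linarith [Nat.lt_floor_add_one (rowCoords A x i)]⟩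

theorem eq_of_boxPoint_add_vecMul_eq (hA : A.det ≠ 0) {p q : Fin d → ℤ} (hp : p ∈ boxPoints A)
    (hq : q ∈ boxPoints A) {y z : Fin d → ℕ}
    (h : p + (fun i => (y i : ℤ)) ᵥ* A = q + (fun i => (z i : ℤ)) ᵥ* A) : p = q ∧ y = z := by
  have hcoords (i : Fin d) : rowCoords A p i + y i = rowCoords A q i + z i := by
    have := congrArg (rowCoords A · i) h
    simpa [rowCoords_add_vecMul hA] using this
  have hyz : y = z := by
    ext i
    have hfloor := congrArg Int.floor (hcoords i)
    rw [Int.floor_add_natCast, Int.floor_add_natCast, Int.floor_eq_zero_iff.2 (hp i),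
      Int.floor_eq_zero_iff.2 (hq i)] at hfloor
    omega
  subst hyz
  exact ⟨add_right_cancel h, rfl⟩

theorem setOf_mem_smul_rowSimplex_eq_biUnion (hA : A.det ≠ 0) (n : ℕ) :
    {x : Fin d → ℤ | (fun j => (x j : ℝ)) ∈ (n : ℝ) • rowSimplex A} =
      ⋃ p ∈ boxPoints A, (fun y : Fin d → ℕ => p + (fun i => (y i : ℤ)) ᵥ* A) ''
        {y | rowHeight A p + ∑ i, y i ≤ n} := by
  ext x
  simp only [mem_ofPred_eq, mem_iUnion, mem_image, exists_prop,
    intCast_mem_smul_rowSimplex_iff hA]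
  constructor
  · rintro ⟨hx, hn⟩
    obtain ⟨p, hp, y, rfl⟩ := exists_boxPoint_add_vecMul hA hx
    exact ⟨p, hp, y, by rwa [rowHeight_add_vecMul hA fun i => (hp i).1] at hn, rfl⟩
  · rintro ⟨p, hp, y, hn, rfl⟩
    rw [rowHeight_add_vecMul hA fun i => (hp i).1, rowCoords_add_vecMul hA]
    exact ⟨fun i => add_nonneg (hp i).1 (by simp), hn⟩

theorem ehr_rowSimplex (hA : A.det ≠ 0) (n : ℕ) :
    ehr (rowSimplex A) n = ∑ p ∈ (boxPoints_finite hA).toFinset,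
      if rowHeight A p ≤ n then (d + (n - rowHeight A p)).choose d else 0 := by
  have hfinite (h : ℕ) : {y : Fin d → ℕ | h + ∑ i, y i ≤ n}.Finite := by
    refine (finite_Iic fun _ => n).subset fun y hy i => ?_
    have := Finset.single_le_sum (fun j _ => (y j).zero_le) (Finset.mem_univ i)
    exact this.trans (le_of_add_le_right hy)
  rw [ehr, setOf_mem_smul_rowSimplex_eq_biUnion hA, (boxPoints_finite hA).ncard_biUnion,
    finsum_mem_eq_finite_toFinset_sum _ (boxPoints_finite hA)]
  · refine Finset.sum_congr rfl fun p hp => ?_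
    have hp' := (boxPoints_finite hA).mem_toFinset.1 hp
    rw [ncard_image_of_injective _ fun y z h => (eq_of_boxPoint_add_vecMul_eq hA hp' hp' h).2,
      ncard_setOf_add_sum_le, Fintype.card_fin]
  · exact fun p _ => (hfinite _).image _
  · rintro p hp q hq hpq
    refine disjoint_left.2 ?_
    rintro _ ⟨y, -, rfl⟩ ⟨z, -, h⟩
    exact hpq (eq_of_boxPoint_add_vecMul_eq hA hq hp h).1.symm

theorem sum_deltaVec_rowSimplex (hA : A.det ≠ 0) :
    ∑ i ∈ Finset.range (d + 1),
      Polynomial.C (deltaVec (rowSimplex A) d i) * Polynomial.X ^ i =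
    ∑ᶠ p ∈ boxPoints A, (Polynomial.X : Polynomial ℤ) ^ rowHeight A p := by
  rw [finsum_mem_eq_finite_toFinset_sum _ (boxPoints_finite hA)]
  exact sum_deltaVec_eq_sum_X_pow
    (fun p hp => rowHeight_le_of_mem_boxPoints ((boxPoints_finite hA).mem_toFinset.1 hp))
    (ehr_rowSimplex hA)

end LatticeSimplex

section OneRow

theorem ceil_intCast_div_intCast {K : Type*} [Field K] [LinearOrder K] [IsStrictOrderedRing K]
    [FloorRing K] {b : ℤ} (hb : 0 ≤ b) (a : ℤ) : ⌈(a / b : K)⌉ = -(-a / b) := by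
  rw [← neg_neg (a / b : K), Int.ceil_neg, ← neg_div, ← Int.cast_neg,
    Int.floor_div_cast_of_nonneg hb, Int.floor_intCast]

theorem det_updateRow_one {n R : Type*} [Fintype n] [DecidableEq n] [CommRing R] (k : n)
    (u : n → R) : (updateRow (1 : Matrix n n R) k u).det = u k := by
  rw [← cramer_transpose_apply, transpose_one, cramer_one, Module.End.one_apply]

theorem vecMul_updateRow_one {n R : Type*} [Fintype n] [DecidableEq n] [CommRing R] (k : n)
    (u c : n → R) : c ᵥ* updateRow 1 k u = Function.update c k 0 + c k • u := by
  ext j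
  rw [vecMul_apply_eq_sum, Fintype.sum_eq_add_sum_compl k, updateRow_self, add_comm]
  congr 1
  rw [Finset.sum_congr rfl fun i hi => by
    rw [updateRow_ne (by simpa using hi), one_apply, mul_ite, mul_one, mul_zero],
    Finset.sum_ite_eq']
  by_cases hj : j = k <;> simp [hj]

variable {d : ℕ} {k : Fin d} {u : Fin d → ℤ}

theorem rowCoords_updateRow_one (hu : u k ≠ 0) (x : Fin d → ℤ) (j : Fin d) :
    rowCoords (updateRow 1 k u) x j =
      (((if j = k then x k else 0) + (u k * x j - u j * x k) : ℤ) : ℝ) / u k := by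
  have hu' : (u k : ℝ) ≠ 0 := Int.cast_ne_zero.2 hu
  have hmap : ((updateRow 1 k u).map fun a => (a : ℝ)) =
      updateRow (1 : Matrix (Fin d) (Fin d) ℝ) k fun j => (u j : ℝ) := by
    rw [map_updateRow, Matrix.map_one _ Int.cast_zero Int.cast_one]
    rfl
  refine congrFun ((rowCoords_eq_iff (det_updateRow_one k u ▸ hu)
    (c := fun j => (((if j = k then x k else 0) + (u k * x j - u j * x k) : ℤ) : ℝ) / u k)).2 ?_) j
  rw [hmap, vecMul_updateRow_one]
  ext j
  by_cases hj : j = k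
  · subst hj
    simp [hu']
  · simp only [Pi.add_apply, Pi.smul_apply, smul_eq_mul, Function.update_of_ne hj, if_neg hj,
      if_true, zero_add, sub_self, add_zero, Int.cast_sub, Int.cast_mul]
    field_simp
    ring

/-- For `0 ≤ r < u k`, the point of `boxPoints (updateRow 1 k u)` whose `k`-th coordinate is `r`:
its `j`-th coordinate is `⌈r * u j / u k⌉`, written with the floor division of integers. -/
def oneRowBoxPoint (k : Fin d) (u : Fin d → ℤ) (r : ℤ) : Fin d → ℤ :=
  fun j => -(-(r * u j) / u k)

theorem oneRowBoxPoint_self (hu : u k ≠ 0) (r : ℤ) : oneRowBoxPoint k u r k = r := by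
  rw [oneRowBoxPoint, ← neg_mul, Int.mul_ediv_cancel _ hu, neg_neg]

theorem mul_oneRowBoxPoint_sub (r : ℤ) (j : Fin d) :
    u k * oneRowBoxPoint k u r j - u j * r = -(r * u j) % u k := by
  rw [oneRowBoxPoint, Int.emod_def]
  ring

theorem mem_boxPoints_updateRow_one_iff (hu : 0 < u k) (x : Fin d → ℤ) :
    x ∈ boxPoints (updateRow 1 k u) ↔
      x k ∈ Ico 0 (u k) ∧ ∀ j, u k * x j - u j * x k ∈ Ico 0 (u k) := by
  have hu' : (0 : ℝ) < u k := Int.cast_pos.2 hu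
  have hcoord (j : Fin d) : rowCoords (updateRow 1 k u) x j ∈ Ico 0 1 ↔
      (if j = k then x k else 0) + (u k * x j - u j * x k) ∈ Ico 0 (u k) := by
    rw [rowCoords_updateRow_one hu.ne', mem_Ico, mem_Ico, le_div_iff₀ hu', zero_mul,
      div_lt_one hu', Int.cast_nonneg_iff, Int.cast_lt]
  simp only [boxPoints, mem_ofPred_eq, hcoord]
  constructor
  · refine fun h => ⟨by simpa using h k, fun j => ?_⟩
    by_cases hj : j = k
    · simpa [hj] using hu
    · simpa [hj] using h j
  · rintro ⟨hk, h⟩ j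
    by_cases hj : j = k
    · simpa [hj] using hk
    · simpa [hj] using h j

theorem boxPoints_updateRow_one (hu : 0 < u k) :
    boxPoints (updateRow 1 k u) = oneRowBoxPoint k u '' Ico 0 (u k) := by
  ext x
  rw [mem_boxPoints_updateRow_one_iff hu]
  constructor
  · rintro ⟨hk, h⟩
    refine ⟨x k, hk, funext fun j => ?_⟩
    have hdiv : -(x k * u j) / u k = -x j :=
      ((Int.ediv_emod_unique hu).2 ⟨by ring, (h j).1, (h j).2⟩).1
    rw [oneRowBoxPoint, hdiv, neg_neg]
  · rintro ⟨r, hr, rfl⟩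
    refine ⟨by rwa [oneRowBoxPoint_self hu.ne'], fun j => ?_⟩
    rw [oneRowBoxPoint_self hu.ne', mul_oneRowBoxPoint_sub]
    exact ⟨Int.emod_nonneg _ hu.ne', Int.emod_lt_of_pos _ hu⟩

theorem rowHeight_oneRowBoxPoint (hu : 0 < u k) (r : ℤ) :
    rowHeight (updateRow 1 k u) (oneRowBoxPoint k u r) =
      (-(-(r + ∑ j, -(r * u j) % u k) / u k)).toNat := by
  have hsum : ∑ j, rowCoords (updateRow 1 k u) (oneRowBoxPoint k u r) j =
      ((r + ∑ j, -(r * u j) % u k : ℤ) : ℝ) / u k := by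
    simp only [rowCoords_updateRow_one hu.ne', oneRowBoxPoint_self hu.ne', mul_oneRowBoxPoint_sub,
      ← Finset.sum_div, ← Int.cast_sum, Finset.sum_add_distrib, Finset.sum_ite_eq',
      Finset.mem_univ, if_true]
  rw [rowHeight, hsum, ← Int.ceil_toNat, ceil_intCast_div_intCast hu.le]

theorem sum_deltaVec_rowSimplex_updateRow_one (hu : 0 < u k) :
    ∑ i ∈ Finset.range (d + 1),
      Polynomial.C (deltaVec (rowSimplex (updateRow 1 k u)) d i) * Polynomial.X ^ i =
    ∑ r ∈ Finset.Ico 0 (u k), (Polynomial.X : Polynomial ℤ) ^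
      (-(-(r + ∑ j, -(r * u j) % u k) / u k)).toNat := by
  have hinj : Function.Injective (oneRowBoxPoint k u) := fun r s h => by
    simpa only [oneRowBoxPoint_self hu.ne'] using congrFun h k
  rw [sum_deltaVec_rowSimplex (det_updateRow_one k u ▸ hu.ne'), boxPoints_updateRow_one hu,
    finsum_mem_image hinj.injOn, ← Finset.coe_Ico, finsum_mem_coe_finset]
  exact Finset.sum_congr rfl fun r _ => by rw [rowHeight_oneRowBoxPoint hu]

end OneRow

section DiagonalFour

theorem sum_neg_mul_emod_four {ι : Type*} [Fintype ι] (u : ι → ℤ) (r : ℤ) :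
    ∑ j, -(r * u j) % 4 =
      -r % 4 * (Finset.univ.filter fun j => u j % 4 = 1).card +
      -(2 * r) % 4 * (Finset.univ.filter fun j => u j % 4 = 2).card +
      -(3 * r) % 4 * (Finset.univ.filter fun j => u j % 4 = 3).card := by
  simp only [Finset.card_filter, Nat.cast_sum, Finset.mul_sum, ← Finset.sum_add_distrib]
  refine Finset.sum_congr rfl fun j _ => ?_
  have hmod : -(r * u j) % 4 = -(u j % 4 * r) % 4 := by
    rw [mul_comm r]
    exact ((Int.mod_modEq (u j) 4).mul_right r).neg.symm
  have hcases : u j % 4 = 0 ∨ u j % 4 = 1 ∨ u j % 4 = 2 ∨ u j % 4 = 3 := by omega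
  rcases hcases with h | h | h | h <;> simp [hmod, h]

theorem card_filter_ite_emod_four {d : ℕ} (k : Fin d) (a : Fin d → ℤ)
    (ha : ∀ ℓ : Fin d, ℓ < k → a ℓ = 0 ∨ a ℓ = 1 ∨ a ℓ = 2 ∨ a ℓ = 3) {c : ℤ} (hc : c ∈ Ioo 0 4) :
    (Finset.univ.filter fun ℓ => ℓ < k ∧ a ℓ = c).card = (Finset.univ.filter fun ℓ =>
      (if ℓ = k then 4 else if ℓ < k then a ℓ else 0) % 4 = c).card := by
  obtain ⟨hc0, hc4⟩ := hc
  congr 1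
  ext ℓ
  simp only [Finset.mem_filter, Finset.mem_univ, true_and]
  by_cases hℓ : ℓ < k
  · have := ha ℓ hℓ
    simp only [hℓ, hℓ.ne, if_true, if_false, true_and]
    omega
  · simp only [hℓ, if_false, false_and, false_iff]
    split_ifs <;> omega

theorem stmt13_general (d : ℕ) (k : Fin d) (u : Fin d → ℤ) (hu : u k = 4) (d1 d2 d3 : ℕ)
    (hd1 : d1 = (Finset.univ.filter fun ℓ => u ℓ % 4 = 1).card)
    (hd2 : d2 = (Finset.univ.filter fun ℓ => u ℓ % 4 = 2).card)
    (hd3 : d3 = (Finset.univ.filter fun ℓ => u ℓ % 4 = 3).card) :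
    ∑ i ∈ Finset.range (d + 1),
      Polynomial.C (deltaVec (rowSimplex (updateRow 1 k u)) d i) * Polynomial.X ^ i
    = 1 + (Polynomial.X : Polynomial ℤ) ^
        ((1 - Int.fdiv (1 - (d1 : ℤ) - 2 * (d2 : ℤ) - 3 * (d3 : ℤ)) 4).toNat)
        + (Polynomial.X : Polynomial ℤ) ^
        ((1 - Int.fdiv (1 - (d1 : ℤ) - (d3 : ℤ)) 2).toNat)
        + (Polynomial.X : Polynomial ℤ) ^
        ((1 - Int.fdiv (3 - 3 * (d1 : ℤ) - 2 * (d2 : ℤ) - (d3 : ℤ)) 4).toNat) := by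
  have hheight (r : ℤ) : -(-(r + ∑ j, -(r * u j) % 4) / 4) =
      -(-(r + (-r % 4 * d1 + -(2 * r) % 4 * d2 + -(3 * r) % 4 * d3)) / 4) := by
    rw [sum_neg_mul_emod_four, hd1, hd2, hd3]
  have hheight₀ : -(-(0 + ∑ j, -(0 * u j) % 4) / 4) = 0 := by
    rw [hheight]
    norm_num
  have hheight₃ : -(-(3 + ∑ j, -(3 * u j) % 4) / 4) =
      1 - (1 - (d1 : ℤ) - 2 * (d2 : ℤ) - 3 * (d3 : ℤ)) / 4 := by
    simp only [hheight, Int.reduceMul]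
    omega
  have hheight₂ : -(-(2 + ∑ j, -(2 * u j) % 4) / 4) = 1 - (1 - (d1 : ℤ) - (d3 : ℤ)) / 2 := by
    simp only [hheight, Int.reduceMul]
    omega
  have hheight₁ : -(-(1 + ∑ j, -(1 * u j) % 4) / 4) =
      1 - (3 - 3 * (d1 : ℤ) - 2 * (d2 : ℤ) - (d3 : ℤ)) / 4 := by
    simp only [hheight, Int.reduceMul]
    omega
  have hIco : Finset.Ico (0 : ℤ) 4 = {0, 3, 2, 1} := by decide
  rw [sum_deltaVec_rowSimplex_updateRow_one (hu ▸ four_pos), hu, hIco,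
    Finset.sum_insert (by decide), Finset.sum_insert (by decide), Finset.sum_insert (by decide),
    Finset.sum_singleton, hheight₀, hheight₃, hheight₂, hheight₁, Int.toNat_zero, pow_zero,
    Int.fdiv_eq_ediv_of_nonneg _ (by norm_num), Int.fdiv_eq_ediv_of_nonneg _ (by norm_num),
    Int.fdiv_eq_ediv_of_nonneg _ (by norm_num), ← add_assoc, ← add_assoc]

end DiagonalFour

theorem stmt13 (d : ℕ) (hd : 1 ≤ d) (k : Fin d) (a : Fin d → ℤ)
    (ha : ∀ ℓ : Fin d, ℓ < k → a ℓ = 0 ∨ a ℓ = 1 ∨ a ℓ = 2 ∨ a ℓ = 3)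
    (A : Matrix (Fin d) (Fin d) ℤ)
    (hA : A = Matrix.of fun i j =>
      if i = k then (if j = k then (4 : ℤ) else if j < k then a j else 0)
      else if i = j then 1 else 0)
    (d1 d2 d3 : ℕ)
    (hd1 : d1 = (Finset.univ.filter fun ℓ : Fin d => ℓ < k ∧ a ℓ = 1).card)
    (hd2 : d2 = (Finset.univ.filter fun ℓ : Fin d => ℓ < k ∧ a ℓ = 2).card)
    (hd3 : d3 = (Finset.univ.filter fun ℓ : Fin d => ℓ < k ∧ a ℓ = 3).card)
    (P : Set (Fin d → ℝ))
    (hP : P = convexHull ℝ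
      (insert (0 : Fin d → ℝ) (Set.range fun i j => (A i j : ℝ)))) :
    ∑ i ∈ Finset.range (d + 1), Polynomial.C (deltaVec P d i) * Polynomial.X ^ i
    = 1 + (Polynomial.X : Polynomial ℤ) ^
        ((1 - Int.fdiv (1 - (d1 : ℤ) - 2 * (d2 : ℤ) - 3 * (d3 : ℤ)) 4).toNat)
        + (Polynomial.X : Polynomial ℤ) ^
        ((1 - Int.fdiv (1 - (d1 : ℤ) - (d3 : ℤ)) 2).toNat)
        + (Polynomial.X : Polynomial ℤ) ^
        ((1 - Int.fdiv (3 - 3 * (d1 : ℤ) - 2 * (d2 : ℤ) - (d3 : ℤ)) 4).toNat) := by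
  have hA' : A = updateRow 1 k fun j => if j = k then 4 else if j < k then a j else 0 := by
    ext i j
    simp [hA, updateRow_apply, one_apply]
  rw [hP, hA']
  exact stmt13_general d k _ (if_pos rfl) d1 d2 d3
    (hd1.trans (card_filter_ite_emod_four k a ha (by norm_num)))
    (hd2.trans (card_filter_ite_emod_four k a ha (by norm_num)))
    (hd3.trans (card_filter_ite_emod_four k a ha (by norm_num)))
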